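/- arXiv:1804.01357 — 2 statements merged into one kernel-verified Lean document; each statement's English description precedes it below -/
import Mathlib

section
/- Let σ > 0, P_0 > 0, P_1 > 0, π_0 ∈ (0,1), π_1 = 1 − π_0, and cost parameters with C_{10} > C_{00} and C_{01} > C_{11}; set τ = π_0(C_{10} − C_{00})/(π_1(C_{01} − C_{11})). For signal levels S_0 < S_1 with S_0² ≤ P_0 and S_1² ≤ P_1, let d = (S_1 − S_0)/σ and define the team Bayes risk R(S_0, S_1) = π_0 C_{00} + π_1 C_{11} + π_0(C_{10} − C_{00}) Q(ln(τ)/d + d/2) + π_1(C_{01} − C_{11}) Q(d/2 − ln(τ)/d) (the risk when the receiver uses the optimal likelihood-ratio test). Then: (i) R is uniquely minimized over {(S_0,S_1) : S_0² ≤ P_0, S_1² ≤ P_1, S_0 < S_1} at (S_0, S_1) = (−√P_0, √P_1), i.e., at maximal separation; and (ii) the minimum value satisfies R(−√P_0, √P_1) < min(π_0 C_{10} + π_1 C_{11}, π_0 C_{00} + π_1 C_{01}), the risks of the two constant (non-informative) decision rules. -/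
/-- The standard Gaussian tail function `Q(x) = ∫_x^∞ (1/√(2π)) e^{-t²/2} dt`. -/
noncomputable def Q (x : ℝ) : ℝ :=
  ∫ t in Set.Ioi x, (1 / Real.sqrt (2 * Real.pi)) * Real.exp (-t ^ 2 / 2)

/-!
Put `a = π₀(C₁₀ - C₀₀)`, `b = π₁(C₀₁ - C₁₁)` and let `φ` be the standard Gaussian density.
The risk depends on the signals only through `d`, and at the likelihood-ratio threshold the
weighted densities agree, `a φ(ln τ / d + d / 2) = b φ(d / 2 - ln τ / d)`. Hence the terms of the
derivative in `d` coming from `ln τ / d` cancel and the derivative is `-a φ(ln τ / d + d / 2) < 0`,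
so the risk is minimal exactly at the largest separation. Beyond the threshold one weighted density
dominates the other pointwise; integrating this shows that the test is never worse than a constant
decision, and strict monotonicity in `d` makes the inequality strict.
-/

open MeasureTheory ProbabilityTheory Set

local notation "φ" => gaussianPDFReal 0 1

section GaussianTail

lemma continuous_gaussianPDFReal (μ : ℝ) (v : NNReal) : Continuous (gaussianPDFReal μ v) := by
  rw [gaussianPDFReal_def]
  fun_prop

lemma Q_eq_setIntegral_gaussianPDFReal (x : ℝ) : Q x = ∫ t in Ioi x, φ t := by
  simp [Q, gaussianPDFReal]

lemma hasDerivAt_Q (x : ℝ) : HasDerivAt Q (-φ x) x := by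
  have Q_eq_sub_integral (y : ℝ) : Q y = Q 0 - ∫ t in (0 : ℝ)..y, φ t := by
    have split := intervalIntegral.integral_Ioi_sub_Ioi' (a := 0) (b := y)
      (integrable_gaussianPDFReal 0 1).integrableOn (integrable_gaussianPDFReal 0 1).integrableOn
    simp only [Q_eq_setIntegral_gaussianPDFReal, ← split, sub_sub_cancel]
  rw [funext Q_eq_sub_integral]
  exact ((continuous_gaussianPDFReal 0 1).integral_hasStrictDerivAt 0 x).hasDerivAt.const_sub (Q 0)

lemma Q_neg (x : ℝ) : Q (-x) = 1 - Q x := by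
  have reflect : Q (-x) = ∫ t in Iic x, φ t := by
    rw [Q_eq_setIntegral_gaussianPDFReal, ← integral_comp_neg_Iic]
    simp [gaussianPDFReal]
  rw [reflect, Q_eq_setIntegral_gaussianPDFReal, eq_sub_iff_add_eq,
    intervalIntegral.integral_Iic_add_Ioi (integrable_gaussianPDFReal 0 1).integrableOn
      (integrable_gaussianPDFReal 0 1).integrableOn,
    integral_gaussianPDFReal_eq_one 0 one_ne_zero]

lemma Q_add_eq_setIntegral (x d : ℝ) : Q (x + d) = ∫ t in Ioi x, φ (t + d) := by
  rw [Q_eq_setIntegral_gaussianPDFReal,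
    ← (measurePreserving_add_right volume d).setIntegral_preimage_emb
      (measurableEmbedding_addRight d)]
  simp

lemma mul_gaussianPDFReal_eq_exp {a : ℝ} (ha : 0 < a) (x : ℝ) :
    a * φ x = (√(2 * Real.pi))⁻¹ * Real.exp (Real.log a - x ^ 2 / 2) := by
  rw [sub_eq_add_neg, Real.exp_add, Real.exp_log ha, mul_left_comm]
  simp [gaussianPDFReal, neg_div]

lemma mul_gaussianPDFReal_le_iff {a b : ℝ} (ha : 0 < a) (hb : 0 < b) (x y : ℝ) :
    a * φ x ≤ b * φ y ↔ Real.log (a / b) ≤ (x ^ 2 - y ^ 2) / 2 := by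
  rw [mul_gaussianPDFReal_eq_exp ha, mul_gaussianPDFReal_eq_exp hb,
    mul_le_mul_iff_right₀ (by positivity), Real.exp_le_exp, Real.log_div ha.ne' hb.ne']
  constructor <;> intro h <;> linarith

end GaussianTail

/-- The excess Bayes risk of the likelihood-ratio test between two unit-variance Gaussians whose
means are `d` apart (`d = (S₁ - S₀) / σ` after rescaling the observation), where `a` and `b` are
the prior-weighted excess costs of the two kinds of error. At `d = 0` the divisions return `0`, so
the value there is not that of an optimal test. -/
noncomputable def lrtRisk (a b d : ℝ) : ℝ :=
  a * Q (Real.log (a / b) / d + d / 2) + b * Q (d / 2 - Real.log (a / b) / d)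

section LikelihoodRatioTest

variable {a b d : ℝ}

lemma lrtRisk_comm (a b d : ℝ) : lrtRisk a b d = lrtRisk b a d := by
  have log_swap : Real.log (a / b) = -Real.log (b / a) := by rw [← Real.log_inv, inv_div]
  simp only [lrtRisk, log_swap]
  ring_nf

lemma weighted_gaussianPDFReal_eq_at_threshold (ha : 0 < a) (hb : 0 < b) (hd : d ≠ 0) :
    a * φ (Real.log (a / b) / d + d / 2) = b * φ (d / 2 - Real.log (a / b) / d) := by
  rw [mul_gaussianPDFReal_eq_exp ha, mul_gaussianPDFReal_eq_exp hb, Real.log_div ha.ne' hb.ne']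
  congr 2
  field_simp
  ring

lemma hasDerivAt_lrtRisk (ha : 0 < a) (hb : 0 < b) (hd : d ≠ 0) :
    HasDerivAt (lrtRisk a b) (-(a * φ (Real.log (a / b) / d + d / 2))) d := by
  have balance := weighted_gaussianPDFReal_eq_at_threshold ha hb hd
  set L := Real.log (a / b)
  have hquot : HasDerivAt (fun t => L / t) (-(L / d ^ 2)) d := by
    simpa [div_eq_mul_inv] using (hasDerivAt_inv hd).const_mul L
  have hhalf : HasDerivAt (fun t : ℝ => t / 2) (1 / 2) d := (hasDerivAt_id d).div_const 2
  have hfirst := ((hasDerivAt_Q _).comp d (hquot.add hhalf)).const_mul a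
  have hsecond := ((hasDerivAt_Q _).comp d (hhalf.sub hquot)).const_mul b
  refine (hfirst.add hsecond).congr_deriv ?_
  simp only [Pi.add_apply, Pi.sub_apply]
  linear_combination (1 / 2 + L / d ^ 2) * balance

lemma strictAntiOn_lrtRisk (ha : 0 < a) (hb : 0 < b) : StrictAntiOn (lrtRisk a b) (Ioi 0) := by
  exact strictAntiOn_of_hasDerivWithinAt_neg (convex_Ioi 0)
    (fun d hd => (hasDerivAt_lrtRisk ha hb (ne_of_gt hd)).continuousAt.continuousWithinAt)
    (fun d hd => (hasDerivAt_lrtRisk ha hb (ne_of_gt (interior_subset hd))).hasDerivWithinAt)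
    fun d _ => neg_neg_of_pos (mul_pos ha (gaussianPDFReal_pos 0 1 _ one_ne_zero))

lemma mul_gaussianPDFReal_add_le (ha : 0 < a) (hb : 0 < b) (hd : 0 < d) {t : ℝ}
    (ht : -(Real.log (a / b) / d + d / 2) ≤ t) : b * φ (t + d) ≤ a * φ t := by
  rw [mul_gaussianPDFReal_le_iff hb ha]
  calc Real.log (b / a) = -(Real.log (a / b) / d + d / 2) * d + d ^ 2 / 2 := by
        rw [← inv_div a b, Real.log_inv]
        field_simp
        ring
    _ ≤ t * d + d ^ 2 / 2 := by gcongr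
    _ = ((t + d) ^ 2 - t ^ 2) / 2 := by ring

lemma lrtRisk_le_left (ha : 0 < a) (hb : 0 < b) (hd : 0 < d) : lrtRisk a b d ≤ a := by
  set s := Real.log (a / b) / d + d / 2 with hs
  have tail_le : b * Q (-s + d) ≤ a * Q (-s) := by
    rw [Q_add_eq_setIntegral, Q_eq_setIntegral_gaussianPDFReal, ← integral_const_mul,
      ← integral_const_mul]
    have hφ := integrable_gaussianPDFReal 0 1
    exact setIntegral_mono_on ((hφ.comp_add_right d).const_mul b).integrableOn
      (hφ.const_mul a).integrableOn measurableSet_Ioi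
      fun t ht => mul_gaussianPDFReal_add_le ha hb hd (le_of_lt ht)
  have shifted_threshold : d / 2 - Real.log (a / b) / d = -s + d := by rw [hs]; ring
  rw [Q_neg] at tail_le
  rw [lrtRisk, shifted_threshold, ← hs]
  linarith

lemma lrtRisk_lt_left (ha : 0 < a) (hb : 0 < b) (hd : 0 < d) : lrtRisk a b d < a :=
  (strictAntiOn_lrtRisk ha hb (half_pos hd) hd (half_lt_self hd)).trans_le
    (lrtRisk_le_left ha hb (half_pos hd))

lemma lrtRisk_lt_right (ha : 0 < a) (hb : 0 < b) (hd : 0 < d) : lrtRisk a b d < b :=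
  lrtRisk_comm a b d ▸ lrtRisk_lt_left hb ha hd

end LikelihoodRatioTest

/-- Team setup: with `τ = π₀(C₁₀-C₀₀)/(π₁(C₀₁-C₁₁))` and the team Bayes risk
`R(S₀,S₁) = π₀C₀₀ + π₁C₁₁ + π₀(C₁₀-C₀₀) Q(ln τ/d + d/2) + π₁(C₀₁-C₁₁) Q(d/2 - ln τ/d)`
(`d = (S₁-S₀)/σ`, the risk under the optimal likelihood-ratio test),
(i) `R` is uniquely minimized over `{S₀² ≤ P₀, S₁² ≤ P₁, S₀ < S₁}` at the maximal
separation `(S₀,S₁) = (-√P₀, √P₁)`, and (ii) the minimum value is strictly smaller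
than the risks of the two constant (non-informative) decision rules. -/
theorem stmt_7 (σ P0 P1 π0 C00 C01 C10 C11 τ : ℝ) (R : ℝ → ℝ → ℝ)
    (hσ : 0 < σ) (hP0 : 0 < P0) (hP1 : 0 < P1)
    (hπ : π0 ∈ Set.Ioo (0 : ℝ) 1) (h10 : C10 > C00) (h01 : C01 > C11)
    (hτ : τ = π0 * (C10 - C00) / ((1 - π0) * (C01 - C11)))
    (hR : ∀ S0 S1 : ℝ, R S0 S1 =
      π0 * C00 + (1 - π0) * C11
        + π0 * (C10 - C00) * Q (Real.log τ / ((S1 - S0) / σ) + ((S1 - S0) / σ) / 2)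
        + (1 - π0) * (C01 - C11) * Q (((S1 - S0) / σ) / 2 - Real.log τ / ((S1 - S0) / σ))) :
    (∀ S0 S1 : ℝ, S0 ^ 2 ≤ P0 → S1 ^ 2 ≤ P1 → S0 < S1 →
        R (-Real.sqrt P0) (Real.sqrt P1) ≤ R S0 S1
          ∧ (R (-Real.sqrt P0) (Real.sqrt P1) = R S0 S1 →
              S0 = -Real.sqrt P0 ∧ S1 = Real.sqrt P1))
      ∧ R (-Real.sqrt P0) (Real.sqrt P1)
          < min (π0 * C10 + (1 - π0) * C11) (π0 * C00 + (1 - π0) * C01) := by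
  have ha : 0 < π0 * (C10 - C00) := mul_pos hπ.1 (sub_pos.2 h10)
  have hb : 0 < (1 - π0) * (C01 - C11) := mul_pos (sub_pos.2 hπ.2) (sub_pos.2 h01)
  have R_eq (S0 S1 : ℝ) : R S0 S1 = π0 * C00 + (1 - π0) * C11
      + lrtRisk (π0 * (C10 - C00)) ((1 - π0) * (C01 - C11)) ((S1 - S0) / σ) := by
    rw [hR, lrtRisk, hτ, add_assoc]
  have hmax : 0 < (√P1 - -√P0) / σ :=
    div_pos (by linarith [Real.sqrt_pos.2 hP0, Real.sqrt_pos.2 hP1]) hσ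
  have anti := strictAntiOn_lrtRisk ha hb
  refine ⟨fun S0 S1 hS0 hS1 hlt => ?_, ?_⟩
  · have lower : -√P0 ≤ S0 := Real.neg_sqrt_le_of_sq_le hS0
    have upper : S1 ≤ √P1 := Real.le_sqrt_of_sq_le hS1
    have hsep : 0 < (S1 - S0) / σ := div_pos (sub_pos.2 hlt) hσ
    simp only [R_eq, add_le_add_iff_left, add_right_inj]
    refine ⟨anti.antitoneOn hsep hmax (by gcongr), fun heq => ?_⟩
    have sep_eq : √P1 - -√P0 = S1 - S0 := (div_left_inj' hσ.ne').1 (anti.injOn hmax hsep heq)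
    constructor <;> linarith
  · rw [R_eq]
    apply lt_min
    · linarith [lrtRisk_lt_left ha hb hmax]
    · linarith [lrtRisk_lt_right ha hb hmax]
end

section
/- Suppose σ > 0, P_0 > P_1 > 0, π_0^t, π_0^r ∈ (0,1), the receiver costs satisfy C_{10}^r > C_{00}^r and C_{01}^r > C_{11}^r, and the transmitter costs satisfy C_{10}^t > C_{00}^t and C_{01}^t < C_{11}^t (i.e., ξ_0 > 0 and ξ_1 < 0). Let S_0* = −√P_0, S_1* = −√P_1, τ = π_0^r(C_{10}^r − C_{00}^r)/(π_1^r(C_{01}^r − C_{11}^r)), and η* = (S_0* + S_1*)/2 + σ² ln(τ)/(S_1* − S_0*). Then the pair ((S_0*, S_1*), [η*, ∞)) is a Nash equilibrium of the binary Gaussian signaling game, and it is informative (S_0* ≠ S_1*). -/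
/-- Gaussian density with standard deviation `σ` (centered at 0). -/
noncomputable def gauss (σ y : ℝ) : ℝ :=
  (1 / (σ * Real.sqrt (2 * Real.pi))) * Real.exp (-y ^ 2 / (2 * σ ^ 2))

/-- Bayes risk of a player with prior `π₀` (and `π₁ = 1 - π₀`) and costs `Cⱼᵢ`
(cost of deciding `Hⱼ` when `Hᵢ` is true), when the signal levels are `S₀, S₁` and
the receiver decides `H₁` iff the observation lies in `Γ₁`. -/
noncomputable def bayesRisk (σ S0 S1 π0 C00 C01 C10 C11 : ℝ) (Γ1 : Set ℝ) : ℝ :=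
  π0 * (C00 * (∫ y in Γ1ᶜ, gauss σ (y - S0)) + C10 * (∫ y in Γ1, gauss σ (y - S0)))
    + (1 - π0) * (C01 * (∫ y in Γ1ᶜ, gauss σ (y - S1)) + C11 * (∫ y in Γ1, gauss σ (y - S1)))

/-!
For a threshold region `[η, ∞)` the probability of deciding `H₁` increases with the signal level.
Since `ξ₀ > 0` and `ξ₁ < 0`, the transmitter wants this probability small under both hypotheses, so
it sends the lowest admissible levels `-√P₀` and `-√P₁`. As `P₀ > P₁` these are ordered
`S₀ < S₁`, so the likelihood ratio is increasing in the observation and the receiver's Bayes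
optimal region is indeed of the form `[η, ∞)`.
-/

section Tail

open MeasureTheory Set

lemma setIntegral_Ici_comp_sub_right {E : Type*} [NormedAddCommGroup E] [NormedSpace ℝ E]
    (f : ℝ → E) (η S : ℝ) :
    ∫ y in Ici η, f (y - S) = ∫ y in Ici (η - S), f y := by
  have preimage_eq : (· - S) ⁻¹' Ici (η - S) = Ici η := by
    ext y
    simp
  rw [← preimage_eq]
  exact (measurePreserving_sub_right volume S).setIntegral_preimage_emb
    (measurableEmbedding_subRight S) f _

lemma monotone_setIntegral_Ici_comp_sub_right {f : ℝ → ℝ} (hf : Integrable f) (hf0 : 0 ≤ f)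
    (η : ℝ) : Monotone fun S => ∫ y in Ici η, f (y - S) := by
  intro S S' hS
  simp only [setIntegral_Ici_comp_sub_right]
  exact setIntegral_mono_set hf.integrableOn (.of_forall hf0)
    (Ici_subset_Ici.mpr (by linarith)).eventuallyLE

end Tail

section Gauss

open MeasureTheory ProbabilityTheory Set

variable {σ : ℝ}

lemma gauss_sub_eq_gaussianPDFReal (hσ : 0 ≤ σ) (y S : ℝ) :
    gauss σ (y - S) = gaussianPDFReal S (σ ^ 2).toNNReal y := by
  rw [gauss, gaussianPDFReal, Real.coe_toNNReal _ (sq_nonneg σ),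
    Real.sqrt_mul (x := 2 * Real.pi) (by positivity), Real.sqrt_sq hσ, one_div, mul_comm σ]

lemma gauss_eq_gaussianPDFReal (hσ : 0 ≤ σ) : gauss σ = gaussianPDFReal 0 (σ ^ 2).toNNReal := by
  ext y
  simpa only [sub_zero] using gauss_sub_eq_gaussianPDFReal hσ y 0

lemma gauss_nonneg (hσ : 0 ≤ σ) : 0 ≤ gauss σ := by
  rw [gauss_eq_gaussianPDFReal hσ]
  exact gaussianPDFReal_nonneg _ _

lemma integrable_gauss (hσ : 0 ≤ σ) : Integrable (gauss σ) := by
  rw [gauss_eq_gaussianPDFReal hσ]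
  exact integrable_gaussianPDFReal _ _

lemma integrable_mul_gauss_sub (hσ : 0 ≤ σ) (c S : ℝ) :
    Integrable fun y => c * gauss σ (y - S) :=
  ((integrable_gauss hσ).comp_sub_right S).const_mul c

lemma measurable_gauss : Measurable (gauss σ) := by
  unfold gauss
  fun_prop

lemma integral_gauss_sub (hσ : 0 < σ) (S : ℝ) : ∫ y, gauss σ (y - S) = 1 := by
  simp only [gauss_sub_eq_gaussianPDFReal hσ.le]
  exact integral_gaussianPDFReal_eq_one S (Real.toNNReal_pos.mpr (by positivity)).ne'

lemma setIntegral_compl_gauss_sub (hσ : 0 < σ) (S : ℝ) {Γ : Set ℝ} (hΓ : MeasurableSet Γ) :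
    ∫ y in Γᶜ, gauss σ (y - S) = 1 - ∫ y in Γ, gauss σ (y - S) := by
  rw [setIntegral_compl hΓ ((integrable_gauss hσ.le).comp_sub_right S), integral_gauss_sub hσ]

lemma mul_gauss_eq_mul_exp {a : ℝ} (ha : 0 < a) (y : ℝ) :
    a * gauss σ y =
      1 / (σ * √(2 * Real.pi)) * Real.exp (Real.log a + -y ^ 2 / (2 * σ ^ 2)) := by
  rw [Real.exp_add, Real.exp_log ha, gauss]
  ring

/-- The observation at which the likelihood ratio of a Gaussian centred at `S1` against one
centred at `S0`, both of standard deviation `σ`, equals `τ`. Meaningful only for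
`S0 ≠ S1` and `0 < τ`. -/
noncomputable def likelihoodThreshold (σ S0 S1 τ : ℝ) : ℝ :=
  (S0 + S1) / 2 + σ ^ 2 * Real.log τ / (S1 - S0)

lemma mul_gauss_le_mul_gauss_iff (hσ : 0 < σ) {a b S0 S1 : ℝ} (ha : 0 < a) (hb : 0 < b)
    (hS : S0 < S1) (y : ℝ) :
    a * gauss σ (y - S0) ≤ b * gauss σ (y - S1) ↔
      likelihoodThreshold σ S0 S1 (a / b) ≤ y := by
  have hd : 0 < S1 - S0 := sub_pos.mpr hS
  have exponent_sub :
      (Real.log b + -(y - S1) ^ 2 / (2 * σ ^ 2)) - (Real.log a + -(y - S0) ^ 2 / (2 * σ ^ 2)) =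
        (y - likelihoodThreshold σ S0 S1 (a / b)) * ((S1 - S0) / σ ^ 2) := by
    rw [likelihoodThreshold, Real.log_div ha.ne' hb.ne']
    field_simp
    ring
  rw [mul_gauss_eq_mul_exp ha, mul_gauss_eq_mul_exp hb, mul_le_mul_iff_right₀ (by positivity),
    Real.exp_le_exp, ← sub_nonneg, exponent_sub, mul_nonneg_iff_of_pos_right (by positivity),
    sub_nonneg]

end Gauss

section BayesRisk

open MeasureTheory Set

variable {σ π0 C00 C01 C10 C11 : ℝ}

lemma bayesRisk_eq (hσ : 0 < σ) (S0 S1 : ℝ) {Γ : Set ℝ} (hΓ : MeasurableSet Γ) :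
    bayesRisk σ S0 S1 π0 C00 C01 C10 C11 Γ =
      π0 * C00 + (1 - π0) * C01 +
        (π0 * (C10 - C00) * (∫ y in Γ, gauss σ (y - S0)) -
          (1 - π0) * (C01 - C11) * ∫ y in Γ, gauss σ (y - S1)) := by
  rw [bayesRisk, setIntegral_compl_gauss_sub hσ S0 hΓ, setIntegral_compl_gauss_sub hσ S1 hΓ]
  ring

lemma bayesRisk_eq_add_setIntegral (hσ : 0 < σ) (S0 S1 : ℝ) {Γ : Set ℝ} (hΓ : MeasurableSet Γ) :
    bayesRisk σ S0 S1 π0 C00 C01 C10 C11 Γ =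
      π0 * C00 + (1 - π0) * C01 +
        ∫ y in Γ, (π0 * (C10 - C00) * gauss σ (y - S0) -
          (1 - π0) * (C01 - C11) * gauss σ (y - S1)) := by
  rw [bayesRisk_eq hσ S0 S1 hΓ,
    integral_sub (integrable_mul_gauss_sub hσ.le _ S0).integrableOn
      (integrable_mul_gauss_sub hσ.le _ S1).integrableOn,
    integral_const_mul, integral_const_mul]

lemma bayesRisk_Ici_le_bayesRisk_Ici (hσ : 0 < σ) (hπ : π0 ∈ Icc 0 1) (hC0 : C00 ≤ C10)
    (hC1 : C01 ≤ C11) {S0 S0' S1 S1' : ℝ} (hS0 : S0 ≤ S0') (hS1 : S1 ≤ S1') (η : ℝ) :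
    bayesRisk σ S0 S1 π0 C00 C01 C10 C11 (Ici η) ≤
      bayesRisk σ S0' S1' π0 C00 C01 C10 C11 (Ici η) := by
  have tail_mono : Monotone fun S => ∫ y in Ici η, gauss σ (y - S) :=
    monotone_setIntegral_Ici_comp_sub_right (integrable_gauss hσ.le) (gauss_nonneg hσ.le) η
  have under_H0 := mul_le_mul_of_nonneg_left (tail_mono hS0)
    (mul_nonneg hπ.1 (sub_nonneg.mpr hC0))
  have under_H1 := mul_le_mul_of_nonneg_left (tail_mono hS1)
    (mul_nonneg (sub_nonneg.mpr hπ.2) (sub_nonneg.mpr hC1))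
  rw [bayesRisk_eq hσ _ _ measurableSet_Ici, bayesRisk_eq hσ _ _ measurableSet_Ici]
  linarith

lemma bayesRisk_Ici_likelihoodThreshold_le (hσ : 0 < σ) (hπ : π0 ∈ Ioo 0 1) (hC0 : C00 < C10)
    (hC1 : C11 < C01) {S0 S1 : ℝ} (hS : S0 < S1) {Γ : Set ℝ} (hΓ : MeasurableSet Γ) :
    bayesRisk σ S0 S1 π0 C00 C01 C10 C11
        (Ici (likelihoodThreshold σ S0 S1 (π0 * (C10 - C00) / ((1 - π0) * (C01 - C11))))) ≤
      bayesRisk σ S0 S1 π0 C00 C01 C10 C11 Γ := by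
  rw [bayesRisk_eq_add_setIntegral hσ S0 S1 measurableSet_Ici,
    bayesRisk_eq_add_setIntegral hσ S0 S1 hΓ]
  have ha : 0 < π0 * (C10 - C00) := mul_pos hπ.1 (sub_pos.mpr hC0)
  have hb : 0 < (1 - π0) * (C01 - C11) := mul_pos (sub_pos.mpr hπ.2) (sub_pos.mpr hC1)
  generalize π0 * (C10 - C00) = a at ha ⊢
  generalize (1 - π0) * (C01 - C11) = b at hb ⊢
  have Ici_eq : Ici (likelihoodThreshold σ S0 S1 (a / b)) =
      {y | a * gauss σ (y - S0) - b * gauss σ (y - S1) ≤ 0} := by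
    ext y
    rw [mem_Ici, mem_ofPred_eq, sub_nonpos, mul_gauss_le_mul_gauss_iff hσ ha hb hS]
  have measurable_mul_gauss (c S : ℝ) : Measurable fun y => c * gauss σ (y - S) :=
    (measurable_gauss.comp (measurable_sub_const S)).const_mul c
  rw [Ici_eq]
  refine add_le_add_right (setIntegral_nonpos_le hΓ ?_ ?_) _
  · exact ((measurable_mul_gauss a S0).sub (measurable_mul_gauss b S1)).stronglyMeasurable
  · exact (integrable_mul_gauss_sub hσ.le a S0).sub (integrable_mul_gauss_sub hσ.le b S1)

end BayesRisk

/-- When `ξ₀ > 0`, `ξ₁ < 0` and `P₀ > P₁ > 0`, the pair `((-√P₀, -√P₁), [η*, ∞))`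
with `η* = (S₀*+S₁*)/2 + σ² ln τ/(S₁*-S₀*)`, `τ = π₀ʳ(C₁₀ʳ-C₀₀ʳ)/(π₁ʳ(C₀₁ʳ-C₁₁ʳ))`,
is an informative Nash equilibrium of the binary Gaussian signaling game. -/
theorem stmt_17 (σ P0 P1 π0t π0r C00t C01t C10t C11t C00r C01r C10r C11r : ℝ)
    (hσ : 0 < σ) (hP1 : 0 < P1) (hP10 : P1 < P0)
    (hπt : π0t ∈ Set.Ioo (0 : ℝ) 1) (hπr : π0r ∈ Set.Ioo (0 : ℝ) 1)
    (hr10 : C10r > C00r) (hr01 : C01r > C11r)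
    (ht10 : C10t > C00t) (ht01 : C01t < C11t)
    (S0s S1s τ ηs : ℝ)
    (hS0s : S0s = -Real.sqrt P0) (hS1s : S1s = -Real.sqrt P1)
    (hτ : τ = π0r * (C10r - C00r) / ((1 - π0r) * (C01r - C11r)))
    (hηs : ηs = (S0s + S1s) / 2 + σ ^ 2 * Real.log τ / (S1s - S0s)) :
    (∀ S0 S1 : ℝ, S0 ^ 2 ≤ P0 → S1 ^ 2 ≤ P1 →
        bayesRisk σ S0s S1s π0t C00t C01t C10t C11t (Set.Ici ηs)
          ≤ bayesRisk σ S0 S1 π0t C00t C01t C10t C11t (Set.Ici ηs))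
      ∧ (∀ Γ1 : Set ℝ, MeasurableSet Γ1 →
          bayesRisk σ S0s S1s π0r C00r C01r C10r C11r (Set.Ici ηs)
            ≤ bayesRisk σ S0s S1s π0r C00r C01r C10r C11r Γ1)
      ∧ S0s ≠ S1s := by
  subst hτ hηs
  have hS : S0s < S1s := by
    rw [hS0s, hS1s]
    exact neg_lt_neg (Real.sqrt_lt_sqrt hP1.le hP10)
  refine ⟨fun S0 S1 hS0 hS1 => ?_, fun Γ1 hΓ1 => ?_, hS.ne⟩
  · exact bayesRisk_Ici_le_bayesRisk_Ici hσ (Set.Ioo_subset_Icc_self hπt) ht10.le ht01.le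
      (hS0s.trans_le (Real.neg_sqrt_le_of_sq_le hS0))
      (hS1s.trans_le (Real.neg_sqrt_le_of_sq_le hS1)) _
  · exact bayesRisk_Ici_likelihoodThreshold_le hσ hπr hr10 hr01 hS hΓ1
end
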